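/- Define reals v_1,…,v_N by v_N = 1/q_N and v_i = (e_i·v_{i+1} + 1)/q_i for i = N−1,…,1, and reals w_1,…,w_N by w_1 = 1/q_1 and w_i = (e_{i−1}·w_{i−1} + 1)/q_i for i = 2,…,N. Then for every i = 1,…,N, v_i equals the (i,i)-entry of (B^⊤B)^{−1} and w_i equals the (i,i)-entry of (BB^⊤)^{−1}. -/

import Mathlib

open Matrix

/-!
Let `C = B⁻¹`, so that `(BᵀB)⁻¹ = C Cᵀ`. If row `i` of `B` is `a eᵢ + z` with `zᵢ = 0`, then
`B C = 1` gives `a Cᵢ = eᵢ - z C`, where `Cᵢ` is row `i` of `C`. For triangular `B` the vector `z C`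
is orthogonal to `eᵢ`, so Pythagoras yields `a² (BᵀB)⁻¹ᵢᵢ = 1 + z (BᵀB)⁻¹ zᵀ`. When `B` is upper
bidiagonal, `z` is supported on the single index `i + 1` and this is the recurrence for `v`; applied
to `Bᵀ`, which is triangular for the reversed order, it is the recurrence for `w`.
-/

section Triangular

variable {n R α : Type*} [Fintype n] [DecidableEq n] [CommRing R] [LinearOrder α]
  {B : Matrix n n R} {b : n → α} {i k : n} {a c : R} {z : n → R}

theorem single_dotProduct_mulVec_single (M : Matrix n n R) (i : n) (a : R) :
    Pi.single i a ⬝ᵥ M *ᵥ Pi.single i a = a ^ 2 * M i i := by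
  simp only [mulVec_single, op_smul_eq_smul, dotProduct_smul, single_dotProduct, col_apply,
    smul_eq_mul]
  ring

theorem dotProduct_inv_transpose_mul_self_mulVec (B : Matrix n n R) (x : n → R) :
    x ⬝ᵥ (Bᵀ * B)⁻¹ *ᵥ x = (x ᵥ* B⁻¹) ⬝ᵥ (x ᵥ* B⁻¹) := by
  rw [Matrix.mul_inv_rev, ← transpose_nonsing_inv, ← mulVec_mulVec, mulVec_transpose,
    dotProduct_mulVec]

theorem vecMul_inv_apply_eq_zero_of_row_eq (hB : B.BlockTriangular b) (hb : b.Injective)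
    (hdet : IsUnit B.det) (hrow : B i = Pi.single i a + z) (hz : z i = 0) :
    (z ᵥ* B⁻¹) i = 0 := by
  let := B.invertibleOfIsUnitDet hdet
  refine Finset.sum_eq_zero fun k _ => ?_
  obtain hki | hki | hik := lt_trichotomy (b k) (b i)
  · have hne : k ≠ i := by rintro rfl; exact hki.false
    have hzk : z k = 0 := by simpa [hrow, hne] using hB hki
    rw [hzk, zero_mul]
  · rw [hb hki, hz, zero_mul]
  · exact mul_eq_zero_of_right _ (blockTriangular_inv_of_blockTriangular hB hik)

theorem sq_mul_inv_transpose_mul_self_apply_of_row_eq (hB : B.BlockTriangular b)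
    (hb : b.Injective) (hdet : IsUnit B.det) (hrow : B i = Pi.single i a + z) (hz : z i = 0) :
    a ^ 2 * (Bᵀ * B)⁻¹ i i = 1 + z ⬝ᵥ (Bᵀ * B)⁻¹ *ᵥ z := by
  have hBi : B i ᵥ* B⁻¹ = Pi.single i 1 := by
    rw [← mul_apply_eq_vecMul, mul_nonsing_inv B hdet]
    exact funext fun _ => one_eq_pi_single
  have hdiff : Pi.single i a ᵥ* B⁻¹ = Pi.single i 1 - z ᵥ* B⁻¹ := by
    rw [← hBi, ← sub_vecMul, hrow, add_sub_cancel_right]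
  have horth := vecMul_inv_apply_eq_zero_of_row_eq hB hb hdet hrow hz
  calc a ^ 2 * (Bᵀ * B)⁻¹ i i
      = Pi.single i a ⬝ᵥ (Bᵀ * B)⁻¹ *ᵥ Pi.single i a :=
        (single_dotProduct_mulVec_single _ i a).symm
    _ = (Pi.single i 1 - z ᵥ* B⁻¹) ⬝ᵥ (Pi.single i 1 - z ᵥ* B⁻¹) := by
      rw [dotProduct_inv_transpose_mul_self_mulVec, hdiff]
    _ = 1 + (z ᵥ* B⁻¹) ⬝ᵥ (z ᵥ* B⁻¹) := by simp [horth]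
    _ = 1 + z ⬝ᵥ (Bᵀ * B)⁻¹ *ᵥ z := by rw [dotProduct_inv_transpose_mul_self_mulVec]

theorem sq_mul_inv_transpose_mul_self_apply_of_row_eq_single (hB : B.BlockTriangular b)
    (hb : b.Injective) (hdet : IsUnit B.det) (hrow : B i = Pi.single i a) :
    a ^ 2 * (Bᵀ * B)⁻¹ i i = 1 := by
  simpa using sq_mul_inv_transpose_mul_self_apply_of_row_eq hB hb hdet
    (hrow.trans (add_zero _).symm) rfl

theorem sq_mul_inv_transpose_mul_self_apply_of_row_eq_single_add_single
    (hB : B.BlockTriangular b) (hb : b.Injective) (hdet : IsUnit B.det) (hik : i ≠ k)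
    (hrow : B i = Pi.single i a + Pi.single k c) :
    a ^ 2 * (Bᵀ * B)⁻¹ i i = c ^ 2 * (Bᵀ * B)⁻¹ k k + 1 := by
  rw [sq_mul_inv_transpose_mul_self_apply_of_row_eq hB hb hdet hrow (Pi.single_eq_of_ne hik _),
    single_dotProduct_mulVec_single, add_comm]

end Triangular

/-- The `N × N` upper bidiagonal matrix with diagonal entries `d 0, …, d (N - 1)` and superdiagonal
entries `u 0, …, u (N - 2)`. The sequences are indexed by `ℕ`, so that the two diagonals can be
shifted against each other without casts between `Fin` types; their further values are ignored. -/
def upperBidiagonal {R : Type*} [Zero R] (N : ℕ) (d u : ℕ → R) : Matrix (Fin N) (Fin N) R :=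
  of fun i j => if (j : ℕ) = i then d i else if (j : ℕ) = i + 1 then u i else 0

namespace upperBidiagonal

section Entries

variable {R : Type*} {N i : ℕ} (d u : ℕ → R)

theorem isUpperTriangular [Zero R] : (upperBidiagonal N d u).IsUpperTriangular := by
  intro i j (hji : (j : ℕ) < i)
  simp [upperBidiagonal, hji.ne, (hji.trans i.val.lt_succ_self).ne]

theorem det_eq_prod [CommRing R] : (upperBidiagonal N d u).det = ∏ i : Fin N, d i := by
  rw [det_of_isUpperTriangular (isUpperTriangular d u)]
  simp [upperBidiagonal]

theorem row_eq [AddZeroClass R] (hi : i + 1 < N) :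
    upperBidiagonal N d u ⟨i, by omega⟩ =
      Pi.single ⟨i, by omega⟩ (d i) + Pi.single ⟨i + 1, hi⟩ (u i) := by
  ext j
  simp only [upperBidiagonal, of_apply, Pi.add_apply, Pi.single_apply, Fin.ext_iff]
  grind [add_zero, zero_add]

theorem row_last_eq [Zero R] (hi : i + 1 = N) :
    upperBidiagonal N d u ⟨i, by omega⟩ = Pi.single ⟨i, by omega⟩ (d i) := by
  ext j
  simp only [upperBidiagonal, of_apply, Pi.single_apply, Fin.ext_iff]
  grind

theorem transpose_row_succ_eq [AddZeroClass R] (hi : i + 1 < N) :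
    (upperBidiagonal N d u)ᵀ ⟨i + 1, hi⟩ =
      Pi.single ⟨i + 1, hi⟩ (d (i + 1)) + Pi.single ⟨i, by omega⟩ (u i) := by
  ext j
  simp only [upperBidiagonal, transpose_apply, of_apply, Pi.add_apply, Pi.single_apply, Fin.ext_iff]
  grind [add_zero, zero_add]

theorem transpose_row_zero_eq [Zero R] (hN : 0 < N) :
    (upperBidiagonal N d u)ᵀ ⟨0, hN⟩ = Pi.single ⟨0, hN⟩ (d 0) := by
  ext j
  simp only [upperBidiagonal, transpose_apply, of_apply, Pi.single_apply, Fin.ext_iff]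
  grind

end Entries

section Field

variable {K : Type*} [Field K] {N : ℕ} {q e d u v w : ℕ → K}

theorem isUnit_det (hd : ∀ i < N, d i ≠ 0) : IsUnit (upperBidiagonal N d u).det := by
  rw [det_eq_prod, isUnit_iff_ne_zero, Finset.prod_ne_zero_iff]
  exact fun i _ => hd i i.isLt

theorem eq_inv_transpose_mul_self_apply (hq : ∀ i < N, d i ^ 2 = q i)
    (he : ∀ i, i + 1 < N → u i ^ 2 = e i) (hq0 : ∀ i < N, q i ≠ 0)
    (hlast : v (N - 1) = 1 / q (N - 1))
    (hstep : ∀ i, i + 1 < N → v i = (e i * v (i + 1) + 1) / q i) {i : ℕ} (hi : i < N) :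
    v i = ((upperBidiagonal N d u)ᵀ * upperBidiagonal N d u)⁻¹ ⟨i, hi⟩ ⟨i, hi⟩ := by
  have hB := isUpperTriangular (N := N) d u
  have hdet : IsUnit (upperBidiagonal N d u).det :=
    isUnit_det fun i hi => pow_ne_zero_iff two_ne_zero |>.mp (hq i hi ▸ hq0 i hi)
  have hle : i ≤ N - 1 := by omega
  induction hle using Nat.decreasingInduction with
  | self =>
    rw [hlast, div_eq_iff (hq0 _ hi), mul_comm, ← hq _ hi]
    exact (sq_mul_inv_transpose_mul_self_apply_of_row_eq_single hB Function.injective_id hdet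
      (row_last_eq d u (by omega))).symm
  | of_succ i hlt ih =>
    have hi1 : i + 1 < N := by omega
    rw [hstep i hi1, ih hi1, div_eq_iff (hq0 i hi), mul_comm _ (q i), ← hq i hi, ← he i hi1]
    exact (sq_mul_inv_transpose_mul_self_apply_of_row_eq_single_add_single hB
      Function.injective_id hdet (by simp) (row_eq d u hi1)).symm

theorem eq_inv_mul_transpose_self_apply (hq : ∀ i < N, d i ^ 2 = q i)
    (he : ∀ i, i + 1 < N → u i ^ 2 = e i) (hq0 : ∀ i < N, q i ≠ 0)
    (hzero : w 0 = 1 / q 0)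
    (hstep : ∀ i, 0 < i → i < N → w i = (e (i - 1) * w (i - 1) + 1) / q i) {i : ℕ} (hi : i < N) :
    w i = (upperBidiagonal N d u * (upperBidiagonal N d u)ᵀ)⁻¹ ⟨i, hi⟩ ⟨i, hi⟩ := by
  have hB := (isUpperTriangular (N := N) d u).transpose
  have hdet : IsUnit (upperBidiagonal N d u)ᵀ.det := isUnit_det_transpose _ <|
    isUnit_det fun i hi => pow_ne_zero_iff two_ne_zero |>.mp (hq i hi ▸ hq0 i hi)
  induction i with
  | zero =>
    rw [hzero, div_eq_iff (hq0 0 hi), mul_comm, ← hq 0 hi]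
    exact (sq_mul_inv_transpose_mul_self_apply_of_row_eq_single hB
      OrderDual.toDual.injective hdet (transpose_row_zero_eq d u hi)).symm
  | succ i ih =>
    rw [hstep (i + 1) i.succ_pos hi, Nat.add_sub_cancel, ih (by omega), div_eq_iff (hq0 _ hi),
      mul_comm _ (q _), ← hq _ hi, ← he i hi]
    exact (sq_mul_inv_transpose_mul_self_apply_of_row_eq_single_add_single hB
      OrderDual.toDual.injective hdet (by simp) (transpose_row_succ_eq d u hi)).symm

end Field

end upperBidiagonal

theorem stmt_2_general {K : Type*} [Field K] {N : ℕ} {q e d u v w : ℕ → K}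
    (hq : ∀ i < N, d i ^ 2 = q i) (he : ∀ i, i + 1 < N → u i ^ 2 = e i)
    (hq0 : ∀ i < N, q i ≠ 0)
    (hvN : v (N - 1) = 1 / q (N - 1))
    (hvi : ∀ i, i + 1 < N → v i = (e i * v (i + 1) + 1) / q i)
    (hw1 : w 0 = 1 / q 0)
    (hwi : ∀ i, 0 < i → i < N → w i = (e (i - 1) * w (i - 1) + 1) / q i) (i : ℕ) (hi : i < N) :
    v i = ((upperBidiagonal N d u)ᵀ * upperBidiagonal N d u)⁻¹ ⟨i, hi⟩ ⟨i, hi⟩ ∧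
      w i = (upperBidiagonal N d u * (upperBidiagonal N d u)ᵀ)⁻¹ ⟨i, hi⟩ ⟨i, hi⟩ :=
  ⟨upperBidiagonal.eq_inv_transpose_mul_self_apply hq he hq0 hvN hvi hi,
    upperBidiagonal.eq_inv_mul_transpose_self_apply hq he hq0 hw1 hwi hi⟩

/-- the M = 1 recurrences compute the diagonal entries of `(BᵀB)⁻¹`
and `(BBᵀ)⁻¹`. Indices are 0-based: the paper's 1-based `v_i` is `v (i-1)`, etc. -/
theorem stmt_2 (N : ℕ) (hN : 0 < N) (q e : ℕ → ℝ)
    (hq : ∀ i, i < N → 0 < q i) (he : ∀ i, i + 1 < N → 0 < e i)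
    (B : Matrix (Fin N) (Fin N) ℝ)
    (hB : ∀ i j : Fin N, B i j =
      if (j : ℕ) = (i : ℕ) then Real.sqrt (q i)
      else if (j : ℕ) = (i : ℕ) + 1 then Real.sqrt (e i) else 0)
    (v w : ℕ → ℝ)
    (hvN : v (N - 1) = 1 / q (N - 1))
    (hvi : ∀ i, i + 1 < N → v i = (e i * v (i + 1) + 1) / q i)
    (hw1 : w 0 = 1 / q 0)
    (hwi : ∀ i, 0 < i → i < N → w i = (e (i - 1) * w (i - 1) + 1) / q i) :
    ∀ i (hi : i < N),
      v i = (Bᵀ * B)⁻¹ ⟨i, hi⟩ ⟨i, hi⟩ ∧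
      w i = (B * Bᵀ)⁻¹ ⟨i, hi⟩ ⟨i, hi⟩ := by
  obtain rfl : B = upperBidiagonal N (fun i => √(q i)) (fun i => √(e i)) := Matrix.ext hB
  exact stmt_2_general (fun i hi => Real.sq_sqrt (hq i hi).le)
    (fun i hi => Real.sq_sqrt (he i hi).le) (fun i hi => (hq i hi).ne') hvN hvi hw1 hwi
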